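/- For every n : ℕ, there is no family R : Fin n → (EVM → EVM → Prop) of total preorders on the set of finite-outcome EVMs on the classical bit (each R i reflexive, transitive, and total) such that for all EVMs M, N: M ≼post N ↔ ∀ i, R i M N. In particular, the order dimension of the post-processing partial order on post-processing equivalence classes of finite-outcome classical-bit EVMs is infinite. -/

import Mathlib

/-!
The post-processing order contains the standard example `S_{n+1}`: EVMs `A i`, `B j` indexed by
`Fin (n + 1)` with `A i ≼post B j ↔ i ≠ j`. Given total preorders `R` realizing the order, each
failure `¬ A i ≼post B i` is witnessed by some `R (f i)`. If `f i = f j` with `i ≠ j`, then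
`B i < A i ≤ B j < A j ≤ B i` in that preorder, which is absurd; so `f : Fin (n + 1) → Fin n`
would be injective, contradicting the pigeonhole principle (`stmt_11`).

The example is read off a strictly convex polygonal path from `(0, 0)` to `(1, 1)` with edges
`w t = (1 / K, (2 t + 1) / K ^ 2)`, `K = n + 2`. The binary EVM `A i` is the coarse-graining of `w`
with effect `∑ t ≤ i, w t`, the `i`-th interior vertex of the path, and `B j` is obtained from `w`
by merging the edges on both sides of the `j`-th interior vertex. For `i ≠ j` the `i`-th vertex
survives in `B j`, so `A i` is a coarse-graining of `B j` (`evmA_post_evmB`). The `i`-th vertex is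
cut off in `B i`, and the linear functional supporting the path there shows that it is not of the
form `∑ q t • B i t` with `0 ≤ q ≤ 1` (`not_evmA_post_evmB`).
-/

/-- A finite-outcome effect-valued measure on the classical bit. -/
structure BitEVM where
  m : ℕ
  M : Fin m → ℝ × ℝ
  nonneg : ∀ k, 0 ≤ (M k).1 ∧ 0 ≤ (M k).2
  total : ∑ k, M k = ((1 : ℝ), (1 : ℝ))

/-- The classical post-processing relation on finite-outcome classical-bit
EVMs. -/
def BitEVM.Post (E F : BitEVM) : Prop :=
  ∃ p : Fin E.m → Fin F.m → ℝ,
    (∀ j k, 0 ≤ p j k) ∧ (∀ k, ∑ j, p j k = 1) ∧ ∀ j, E.M j = ∑ k, p j k • F.M k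

namespace BitDim

open Finset

/-- The `t`-th edge of a strictly convex path from `(0, 0)` to `(1, 1)` with `n + 2` edges. -/
noncomputable def edge (n : ℕ) (t : Fin (n + 2)) : ℝ × ℝ :=
  (1 / ((n : ℝ) + 2), (2 * (t : ℕ) + 1) / ((n : ℝ) + 2) ^ 2)

lemma edge_nonneg (n : ℕ) (t : Fin (n + 2)) : 0 ≤ (edge n t).1 ∧ 0 ≤ (edge n t).2 := by
  constructor <;> simp only [edge] <;> positivity

lemma sum_edge (n : ℕ) : ∑ t, edge n t = ((1 : ℝ), (1 : ℝ)) := by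
  have hodd : ∀ k : ℕ, ∑ t ∈ range k, (2 * (t : ℝ) + 1) = (k : ℝ) ^ 2 := by
    intro k
    induction k with
    | zero => simp
    | succ k ih => rw [sum_range_succ, ih]; push_cast; ring
  have h2 : (n : ℝ) + 2 ≠ 0 := by positivity
  ext
  · rw [Prod.fst_sum]
    simp only [edge, sum_const, card_univ, Fintype.card_fin, nsmul_eq_mul]
    push_cast
    field_simp
  · rw [Prod.snd_sum]
    simp only [edge]
    rw [← sum_div, Fin.sum_univ_eq_sum_range (fun t : ℕ => 2 * (t : ℝ) + 1) (n + 2), hodd]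
    push_cast
    field_simp

/-- The indicator of the edges preceding the `i`-th interior vertex. -/
noncomputable def before {n : ℕ} (i : Fin (n + 1)) (t : Fin (n + 2)) : ℝ :=
  if (t : ℕ) ≤ i then 1 else 0

lemma before_nonneg {n : ℕ} (i : Fin (n + 1)) (t : Fin (n + 2)) : 0 ≤ before i t := by
  unfold before; split_ifs <;> norm_num

lemma before_le_one {n : ℕ} (i : Fin (n + 1)) (t : Fin (n + 2)) : before i t ≤ 1 := by
  unfold before; split_ifs <;> norm_num

/-- The path with the edges `j` and `j + 1` merged: their sum is stored at position `j`, and the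
zero vector at position `j + 1`. -/
noncomputable def merged {n : ℕ} (j : Fin (n + 1)) (t : Fin (n + 2)) : ℝ × ℝ :=
  edge n t + (if t = j.castSucc then edge n j.succ else 0)
    - (if t = j.succ then edge n j.succ else 0)

lemma sum_smul_merged {n : ℕ} (j : Fin (n + 1)) (q : Fin (n + 2) → ℝ) :
    ∑ t, q t • merged j t
      = ∑ t, q t • edge n t + (q j.castSucc - q j.succ) • edge n j.succ := by
  simp only [merged, smul_sub, smul_add, sum_sub_distrib, sum_add_distrib, smul_ite, smul_zero,
    sum_ite_eq', mem_univ, if_true, sub_smul]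
  abel

/-- The binary EVM whose first effect is the `i`-th interior vertex of the path. -/
noncomputable def evmA {n : ℕ} (i : Fin (n + 1)) : BitEVM where
  m := 2
  M := ![∑ t, before i t • edge n t, ∑ t, (1 - before i t) • edge n t]
  nonneg := by
    have key : ∀ q : Fin (n + 2) → ℝ, (∀ t, 0 ≤ q t) →
        0 ≤ (∑ t, q t • edge n t).1 ∧ 0 ≤ (∑ t, q t • edge n t).2 := by
      intro q hq
      rw [Prod.fst_sum, Prod.snd_sum]
      exact ⟨sum_nonneg fun t _ => mul_nonneg (hq t) (edge_nonneg n t).1,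
        sum_nonneg fun t _ => mul_nonneg (hq t) (edge_nonneg n t).2⟩
    intro k
    fin_cases k
    · exact key _ (before_nonneg i)
    · exact key _ fun t => sub_nonneg.2 (before_le_one i t)
  total := by
    rw [Fin.sum_univ_two]
    simp only [Matrix.cons_val_zero, Matrix.cons_val_one]
    rw [← sum_add_distrib, ← sum_edge n]
    exact sum_congr rfl fun t _ => by rw [← add_smul]; simp

/-- The EVM given by the path with its `j`-th interior vertex cut off. -/
noncomputable def evmB {n : ℕ} (j : Fin (n + 1)) : BitEVM where
  m := n + 2
  M := merged j
  nonneg := by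
    intro t
    have h1 := edge_nonneg n t
    have h2 := edge_nonneg n j.succ
    have hne : j.castSucc ≠ j.succ := (Fin.castSucc_lt_succ (i := j)).ne
    unfold merged
    by_cases ht : t = j.succ
    · subst ht
      simp [hne.symm]
    · by_cases ht' : t = j.castSucc
      · simp only [ht', hne, if_true, if_false, sub_zero, Prod.fst_add, Prod.snd_add]
        rw [ht'] at h1
        exact ⟨add_nonneg h1.1 h2.1, add_nonneg h1.2 h2.2⟩
      · simpa [ht, ht'] using h1
  total := by
    have := sum_smul_merged j (fun _ => 1)
    simpa [sum_edge] using this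

lemma evmA_post_evmB {n : ℕ} {i j : Fin (n + 1)} (hij : i ≠ j) :
    (evmA i).Post (evmB j) := by
  -- Only the vertex `j` separates the two merged edges.
  have hb : before i j.castSucc = before i j.succ := by
    have : (i : ℕ) ≠ j := fun h => hij (Fin.ext h)
    unfold before
    simp only [Fin.val_castSucc, Fin.val_succ]
    congr 1
    apply propext
    omega
  refine ⟨![before i, fun t => 1 - before i t], ?_, ?_, ?_⟩
  · intro k t
    change Fin 2 at k
    fin_cases k
    · exact before_nonneg i t
    · exact sub_nonneg.2 (before_le_one i t)
  · intro t
    refine (Fin.sum_univ_two _).trans ?_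
    exact add_sub_cancel (before i t) 1
  · intro k
    change Fin 2 at k
    fin_cases k
    · change ∑ t, before i t • edge n t = ∑ t, before i t • merged j t
      rw [sum_smul_merged, hb]; simp
    · change ∑ t, (1 - before i t) • edge n t = ∑ t, (1 - before i t) • merged j t
      rw [sum_smul_merged j fun t => 1 - before i t, hb]; simp

lemma not_evmA_post_evmB {n : ℕ} (i : Fin (n + 1)) : ¬ (evmA i).Post (evmB i) := by
  rintro ⟨p, h0, h1, h⟩
  let k₀ : Fin (evmA i).m := (0 : Fin 2)
  let q : Fin (n + 2) → ℝ := p k₀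
  have hq0 : ∀ t, 0 ≤ q t := h0 k₀
  have hq1 : ∀ t, q t ≤ 1 := fun t => by
    rw [← h1 t]
    exact single_le_sum (f := fun k => p k t) (fun k _ => h0 k t) (mem_univ k₀)
  have hv : ∑ t, before i t • edge n t = ∑ t, q t • merged i t := h k₀
  rw [sum_smul_merged] at hv
  -- The functional `(x, y) ↦ (2 i + 2) K x - K ^ 2 y` is positive on the edges up to `i` and
  -- negative on the later ones, with values `1` and `-1` on the edges `i` and `i + 1`.
  let L : ℝ × ℝ →ₗ[ℝ] ℝ :=
    ((2 * (i : ℕ) + 2) * ((n : ℝ) + 2)) • LinearMap.fst ℝ ℝ ℝ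
      - (((n : ℝ) + 2) ^ 2) • LinearMap.snd ℝ ℝ ℝ
  have hn : (n : ℝ) + 2 ≠ 0 := by positivity
  have hL : ∀ t, L (edge n t) = 2 * (i : ℕ) + 1 - 2 * (t : ℕ) := by
    intro t
    simp only [L, edge, LinearMap.sub_apply, LinearMap.smul_apply, LinearMap.fst_apply,
      LinearMap.snd_apply, smul_eq_mul]
    field_simp
    ring
  have hLv := congrArg L hv
  simp only [map_add, map_sum, map_smul, smul_eq_mul, hL] at hLv
  -- By the signs of the functional every summand is nonnegative.
  have hnn : ∀ t : Fin (n + 2),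
      0 ≤ (before i t - q t) * (2 * (i : ℕ) + 1 - 2 * (t : ℕ) : ℝ) := by
    intro t
    unfold before
    split_ifs with ht
    · have : ((t : ℕ) : ℝ) ≤ (i : ℕ) := by exact_mod_cast ht
      exact mul_nonneg (sub_nonneg.2 (hq1 t)) (by linarith)
    · have : ((i : ℕ) : ℝ) + 1 ≤ (t : ℕ) := by exact_mod_cast not_le.1 ht
      exact mul_nonneg_of_nonpos_of_nonpos (by linarith [hq0 t]) (by linarith)
  have hne : i.castSucc ≠ i.succ := (Fin.castSucc_lt_succ (i := i)).ne
  have hle := add_le_sum (fun t _ => hnn t) (mem_univ i.castSucc) (mem_univ i.succ) hne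
  have hb1 : before i i.castSucc = 1 := by simp [before]
  have hb2 : before i i.succ = 0 := by simp [before]
  simp only [sub_mul (before i _), sum_sub_distrib] at hle
  rw [hb1, hb2] at hle
  simp only [Fin.val_castSucc, Fin.val_succ, Nat.cast_add, Nat.cast_one] at hle hLv
  linarith

end BitDim

/-- No finite family of total preorders realizes the post-processing order of
finite-outcome measurements on the classical bit: its order dimension is
infinite. -/
theorem stmt_11 (n : ℕ) :
    ¬ ∃ R : Fin n → BitEVM → BitEVM → Prop,
      (∀ i, (∀ x, R i x x) ∧
        (∀ x y z, R i x y → R i y z → R i x z) ∧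
        (∀ x y, R i x y ∨ R i y x)) ∧
      (∀ M N : BitEVM, M.Post N ↔ ∀ i, R i M N) := by
  rintro ⟨R, hR, hpost⟩
  have hex : ∀ i : Fin (n + 1), ∃ k, ¬ R k (BitDim.evmA i) (BitDim.evmB i) := by
    intro i
    by_contra! hall
    exact BitDim.not_evmA_post_evmB i ((hpost _ _).2 hall)
  choose f hf using hex
  obtain ⟨i, j, hij, hfij⟩ := Fintype.exists_ne_map_eq_of_card_lt f (by simp)
  obtain ⟨-, htrans, htotal⟩ := hR (f i)
  have h1 := (hpost _ _).1 (BitDim.evmA_post_evmB hij) (f i)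
  have h2 := (hpost _ _).1 (BitDim.evmA_post_evmB hij.symm) (f i)
  have hj : R (f i) (BitDim.evmB j) (BitDim.evmA j) :=
    (htotal _ _).resolve_right (hfij ▸ hf j)
  exact hf i (htrans _ _ _ h1 (htrans _ _ _ hj h2))
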